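/- arXiv:2206.09525 — 2 statements merged into one kernel-verified Lean document; each statement's English description precedes it below -/
import Mathlib

section
/- Let n ≥ 2, let v₀,…,v_n be affinely independent points of ℝⁿ with barycentric coordinates λ₀,…,λ_n, let α ∈ 𝕋ⁿ_k, let 0 ≤ i ≠ j ≤ n with α_j ≥ 1, and set β = α + ε_i − ε_j ∈ 𝕋ⁿ_k. Choose ℓ ∈ {0,…,n} with ℓ ≠ i and ℓ ≠ j, and set γ = α + ε_ℓ − ε_j = β + ε_ℓ − ε_i ∈ 𝕋ⁿ_k. Then (1/(γ!·α_j))·div(λ^{α+ε_ℓ} t_{j,ℓ}) + (1/(γ!·β_i))·div(λ^{β+ε_ℓ} t_{ℓ,i}) = λ^α/α! − λ^β/β!, where t_{a,b} = v_b − v_a. -/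
open scoped BigOperators

/-- The divergence of a scalar function times a constant vector is a directional derivative. -/
theorem sum_fderiv_mul_const_single {n : ℕ} {f : (Fin n → ℝ) → ℝ} {x : Fin n → ℝ}
    (hf : DifferentiableAt ℝ f x) (c : Fin n → ℝ) :
    ∑ s : Fin n, fderiv ℝ (fun y => f y * c s) x (Pi.single s 1) = fderiv ℝ f x c := by
  conv_rhs => rw [pi_eq_sum_univ' c, map_sum]
  refine Finset.sum_congr rfl fun s _ => ?_
  rw [fderiv_mul_const hf, map_smul]
  rfl

theorem AffineMap.hasFDerivAt_toContinuousLinearMap_linear {E : Type*} [NormedAddCommGroup E]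
    [NormedSpace ℝ E] [FiniteDimensional ℝ E] (f : E →ᵃ[ℝ] ℝ) (x : E) :
    HasFDerivAt f (LinearMap.toContinuousLinearMap f.linear) x := by
  have h : (f : E → ℝ) = fun y => LinearMap.toContinuousLinearMap f.linear y + f 0 := by
    rw [AffineMap.decomp f]
    ext y
    simp
  conv => enter [1]; rw [h]
  exact (ContinuousLinearMap.hasFDerivAt _).add_const _

/-- The derivative of a monomial in affine functions. -/
theorem hasFDerivAt_prod_affineMap_pow {ι E : Type*} [Fintype ι] [DecidableEq ι]
    [NormedAddCommGroup E] [NormedSpace ℝ E] [FiniteDimensional ℝ E]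
    (lam : ι → (E →ᵃ[ℝ] ℝ)) (e : ι → ℕ) (x : E) :
    HasFDerivAt (fun y => ∏ m, lam m y ^ e m)
      (∑ p, ((e p : ℝ) * ∏ m, lam m x ^ (e m - if m = p then 1 else 0)) •
        LinearMap.toContinuousLinearMap (lam p).linear) x := by
  have h := HasFDerivAt.finsetProd (u := Finset.univ) (x := x) fun m _ =>
    ((lam m).hasFDerivAt_toContinuousLinearMap_linear x).pow (e m)
  refine h.congr_fderiv (Finset.sum_congr rfl fun p _ => ?_)
  have herase : ∏ m ∈ Finset.univ.erase p, lam m x ^ (e m - if m = p then 1 else 0)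
      = ∏ m ∈ Finset.univ.erase p, lam m x ^ e m :=
    Finset.prod_congr rfl fun m hm => by rw [if_neg (Finset.ne_of_mem_erase hm), Nat.sub_zero]
  rw [← Finset.mul_prod_erase _ _ (Finset.mem_univ p), herase, smul_smul, if_pos rfl,
    nsmul_eq_mul]
  congr 1
  ring

/-- The divergence of a barycentric monomial times the edge vector from `v a` to `v b`. -/
theorem sum_fderiv_barycentric_monomial_mul_edge {n : ℕ} {v : Fin (n + 1) → (Fin n → ℝ)}
    {lam : Fin (n + 1) → ((Fin n → ℝ) →ᵃ[ℝ] ℝ)}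
    (hlam : ∀ i j, lam i (v j) = if i = j then 1 else 0)
    (e : Fin (n + 1) → ℕ) (a b : Fin (n + 1)) (x : Fin n → ℝ) :
    ∑ s : Fin n, fderiv ℝ (fun y => (∏ m, lam m y ^ e m) * (v b - v a) s) x (Pi.single s 1)
      = (e b : ℝ) * ∏ m, lam m x ^ (e m - if m = b then 1 else 0)
        - (e a : ℝ) * ∏ m, lam m x ^ (e m - if m = a then 1 else 0) := by
  have h := hasFDerivAt_prod_affineMap_pow lam e x
  have hedge : ∀ p, (lam p).linear (v b - v a)
      = (if p = b then 1 else 0) - if p = a then 1 else 0 := fun p => by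
    rw [← hlam, ← hlam]
    exact (lam p).linearMap_vsub _ _
  rw [sum_fderiv_mul_const_single h.differentiableAt, h.fderiv]
  simp [hedge, mul_sub, Finset.sum_sub_distrib]

theorem prod_factorial_add_single {ι : Type*} [Fintype ι] [DecidableEq ι] (μ : ι → ℕ) (p : ι) :
    ∏ m, (Nat.factorial (μ m + if m = p then 1 else 0) : ℝ)
      = (μ p + 1) * ∏ m, (Nat.factorial (μ m) : ℝ) := by
  rw [← Finset.mul_prod_erase _ _ (Finset.mem_univ p),
    ← Finset.mul_prod_erase _ (fun m => (Nat.factorial (μ m) : ℝ)) (Finset.mem_univ p),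
    Finset.prod_congr rfl fun m hm => by rw [if_neg (Finset.ne_of_mem_erase hm), Nat.add_zero]]
  simp [Nat.factorial_succ, mul_assoc]

/-- detour identity.  With `β = α + ε_i − ε_j` (`α_j ≥ 1`), `l ∉ {i,j}` and
`γ = α + ε_l − ε_j = β + ε_l − ε_i`, one has
`(1/(γ!·α_j)) div(λ^{α+ε_l} t_{j,l}) + (1/(γ!·β_i)) div(λ^{β+ε_l} t_{l,i})
  = λ^α/α! − λ^β/β!`, where `t_{a,b} = v_b − v_a`. -/
theorem div_bernstein_detour_field
    (n k : ℕ) (hn : 2 ≤ n)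
    (v : Fin (n + 1) → (Fin n → ℝ)) (hv : AffineIndependent ℝ v)
    (lam : Fin (n + 1) → ((Fin n → ℝ) →ᵃ[ℝ] ℝ))
    (hlam : ∀ i j, lam i (v j) = if i = j then 1 else 0)
    (hsum : ∀ x : Fin n → ℝ, ∑ i, lam i x = 1)
    (α : Fin (n + 1) → ℕ) (hαk : ∑ i, α i = k)
    (i j l : Fin (n + 1)) (hij : i ≠ j) (hli : l ≠ i) (hlj : l ≠ j)
    (hαj : 1 ≤ α j)
    (β : Fin (n + 1) → ℕ)
    (hβ : β = fun m => (α m + if m = i then 1 else 0) - if m = j then 1 else 0)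
    (γ : Fin (n + 1) → ℕ)
    (hγ : γ = fun m => (α m + if m = l then 1 else 0) - if m = j then 1 else 0)
    (x : Fin n → ℝ) :
    (1 / ((∏ m, (Nat.factorial (γ m) : ℝ)) * (α j : ℝ))) *
      (∑ s : Fin n, fderiv ℝ
        (fun y => (∏ m, (lam m y) ^ (α m + if m = l then 1 else 0)) * (v l - v j) s)
        x (Pi.single s 1))
    + (1 / ((∏ m, (Nat.factorial (γ m) : ℝ)) * (β i : ℝ))) *
      (∑ s : Fin n, fderiv ℝ
        (fun y => (∏ m, (lam m y) ^ (β m + if m = l then 1 else 0)) * (v i - v l) s)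
        x (Pi.single s 1))
    = (∏ m, (lam m x) ^ (α m)) / (∏ m, (Nat.factorial (α m) : ℝ))
      - (∏ m, (lam m x) ^ (β m)) / (∏ m, (Nat.factorial (β m) : ℝ)) := by
  obtain ⟨μ, rfl⟩ : ∃ μ : Fin (n + 1) → ℕ, α = fun m => μ m + if m = j then 1 else 0 :=
    ⟨fun m => α m - if m = j then 1 else 0, by
      ext m
      by_cases h : m = j
      · subst h; simp; omega
      · simp [h]⟩
  obtain rfl : β = fun m => μ m + if m = i then 1 else 0 := by
    rw [hβ]; ext m; dsimp only; omega
  obtain rfl : γ = fun m => μ m + if m = l then 1 else 0 := by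
    rw [hγ]; ext m; dsimp only; omega
  rw [sum_fderiv_barycentric_monomial_mul_edge hlam,
    sum_fderiv_barycentric_monomial_mul_edge hlam]
  have cancel_right : ∀ p q m : Fin (n + 1),
      ((μ m + if m = p then 1 else 0) + if m = q then 1 else 0) - (if m = q then 1 else 0)
        = μ m + if m = p then 1 else 0 := fun p q m => by omega
  have cancel_left : ∀ p q m : Fin (n + 1),
      ((μ m + if m = p then 1 else 0) + if m = q then 1 else 0) - (if m = p then 1 else 0)
        = μ m + if m = q then 1 else 0 := fun p q m => by omega
  simp only [cancel_right, cancel_left, prod_factorial_add_single, if_true, if_neg hli,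
    if_neg hlj, if_neg hli.symm, if_neg hlj.symm]
  have hfact : ∏ m, (Nat.factorial (μ m) : ℝ) ≠ 0 :=
    Finset.prod_ne_zero_iff.mpr fun m _ => by positivity
  push_cast
  have hi : (μ i : ℝ) + 1 ≠ 0 := by positivity
  have hj : (μ j : ℝ) + 1 ≠ 0 := by positivity
  have hl : (μ l : ℝ) + 1 ≠ 0 := by positivity
  field_simp
  ring
end

section
/- Let n ≥ 2 and m ≥ 0 be integers, let r₀, …, r_n be nonnegative integers with r_n = 0, r_{n−1} = m and r_ℓ ≥ 2·r_{ℓ+1} for ℓ = n−2, …, 0, and let k ≥ 2r₀ + 1. Let v₀,…,v_n be affinely independent points of ℝⁿ with barycentric coordinates λ₀,…,λ_n, and let S_ℓ(f) (for ℓ = 0,…,n−1 and f ⊆ {0,…,n} with |f| = ℓ+1) and S_n be the sets of the lattice decomposition. Then the space P_k of real polynomial functions on ℝⁿ of total degree at most k is the internal direct sum, over ℓ = 0,…,n and all such f (with f = {0,…,n} for ℓ = n), of the subspaces span{λ^α : α ∈ S_ℓ(f)}; in particular the Bernstein monomials {λ^α : α ∈ 𝕋ⁿ_k} form a basis of P_k.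 -/
open scoped BigOperators

/-- The lattice tube `D(f, s)` inside the simplicial lattice `𝕋ⁿ_k`. -/
def latticeTube (n k : ℕ) (f : Finset (Fin (n + 1))) (s : ℕ) : Set (Fin (n + 1) → ℕ) :=
  {α | ∑ i, α i = k ∧ ∑ i ∈ fᶜ, α i ≤ s}

/-- The decomposition sets `S_ℓ(f) = D(f, r_ℓ) \ ⋃_{i<ℓ} ⋃_{e ⊆ f, |e| = i+1} D(e, r_i)`. -/
def latticeS (n k : ℕ) (r : ℕ → ℕ) (l : ℕ) (f : Finset (Fin (n + 1))) :
    Set (Fin (n + 1) → ℕ) :=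
  latticeTube n k f (r l) \
    ⋃ i < l, ⋃ e ∈ {e : Finset (Fin (n + 1)) | e ⊆ f ∧ e.card = i + 1},
      latticeTube n k e (r i)

/-- The interior set `S_n = 𝕋ⁿ_k \ ⋃_{i<n} ⋃_{|f| = i+1} D(f, r_i)`. -/
def latticeSTop (n k : ℕ) (r : ℕ → ℕ) : Set (Fin (n + 1) → ℕ) :=
  {α | ∑ i, α i = k} \
    ⋃ i < n, ⋃ f ∈ {f : Finset (Fin (n + 1)) | f.card = i + 1}, latticeTube n k f (r i)

/-- The Bernstein monomial `λ^α = ∏ λ_i^{α_i}` as a function on `ℝⁿ`. -/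
def bernsteinBary {n : ℕ} (lam : Fin (n + 1) → ((Fin n → ℝ) →ᵃ[ℝ] ℝ))
    (α : Fin (n + 1) → ℕ) : (Fin n → ℝ) → ℝ :=
  fun x => ∏ i, (lam i x) ^ (α i)

section BarycentricCoordinates

variable {n : ℕ} {v : Fin (n + 1) → (Fin n → ℝ)} {lam : Fin (n + 1) → ((Fin n → ℝ) →ᵃ[ℝ] ℝ)}

/-- Barycentric coordinates of an affine combination of the vertices are its weights. -/
lemma lam_affineCombination (hlam : ∀ i j, lam i (v j) = if i = j then 1 else 0)
    (w : Fin (n + 1) → ℝ) (hw : ∑ i, w i = 1) (i : Fin (n + 1)) :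
    lam i (Finset.univ.affineCombination ℝ v w) = w i := by
  rw [Finset.map_affineCombination _ _ _ hw,
    Finset.affineCombination_eq_linear_combination _ _ _ hw]
  simp [hlam]

lemma eq_sum_lam_smul (hv : AffineIndependent ℝ v)
    (hlam : ∀ i j, lam i (v j) = if i = j then 1 else 0) (x : Fin n → ℝ) :
    x = ∑ i, lam i x • v i := by
  have htop : affineSpan ℝ (Set.range v) = ⊤ := by
    rw [hv.affineSpan_eq_top_iff_card_eq_finrank_add_one]
    simp
  have hx : x ∈ affineSpan ℝ (Set.range v) := htop ▸ AffineSubspace.mem_top ℝ _ x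
  obtain ⟨w, hw, rfl⟩ := eq_affineCombination_of_mem_affineSpan_of_fintype hx
  simp only [lam_affineCombination hlam w hw]
  rw [Finset.affineCombination_eq_linear_combination _ _ _ hw]

lemma linearIndependent_bernsteinBary
    (hlam : ∀ i j, lam i (v j) = if i = j then 1 else 0) (k : ℕ) :
    LinearIndependent ℝ
      (fun a : {α : Fin (n + 1) → ℕ // ∑ i, α i = k} => bernsteinBary lam a.1) := by
  classical
  rw [linearIndependent_iff']
  intro s g hg a ha
  have hzero : ∀ w : Fin (n + 1) → ℝ, ∑ i, w i = 1 → ∑ b ∈ s, g b * ∏ i, w i ^ b.1 i = 0 := by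
    intro w hw
    have h := congrFun hg (Finset.univ.affineCombination ℝ v w)
    simpa [bernsteinBary, lam_affineCombination hlam w hw] using h
  let F : MvPolynomial (Fin (n + 1)) ℝ :=
    ∑ b ∈ s, MvPolynomial.monomial (Finsupp.equivFunOnFinite.symm b.1) (g b)
  have hF : (∑ i, MvPolynomial.X i) * F = 0 := by
    apply MvPolynomial.funext
    intro c
    simp only [F, map_mul, map_sum, MvPolynomial.eval_X, map_zero, MvPolynomial.eval_monomial]
    by_cases hc : ∑ i, c i = 0
    · rw [hc, zero_mul]
    · have h := hzero (fun i => c i / ∑ j, c j) (by rw [← Finset.sum_div, div_self hc])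
      refine mul_eq_zero_of_right _ ?_
      rw [← mul_zero ((∑ j, c j) ^ k), ← h, Finset.mul_sum]
      refine Finset.sum_congr rfl fun b _ => ?_
      have hp : (∑ j, c j) ^ k = ∏ i, (∑ j, c j) ^ b.1 i := by
        rw [Finset.prod_pow_eq_pow_sum, b.2]
      rw [Finsupp.prod_fintype _ _ (by simp), mul_left_comm, hp, ← Finset.prod_mul_distrib]
      congr 1
      refine Finset.prod_congr rfl fun i _ => ?_
      rw [← mul_pow, mul_div_cancel₀ _ hc]
      rfl
  have hX : (∑ i, MvPolynomial.X i : MvPolynomial (Fin (n + 1)) ℝ) ≠ 0 := by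
    intro h
    have := congrArg (MvPolynomial.eval (fun i => if i = 0 then (1 : ℝ) else 0)) h
    simp at this
  have hF0 : F = 0 := (mul_eq_zero.mp hF).resolve_left hX
  have hcoeff := congrArg (MvPolynomial.coeff (Finsupp.equivFunOnFinite.symm a.1)) hF0
  simpa [F, MvPolynomial.coeff_sum, MvPolynomial.coeff_monomial, Subtype.val_inj, ha] using hcoeff

/-- An affine function on `ℝⁿ` is a polynomial function of degree at most one. -/
lemma AffineMap.exists_mvPolynomial_eval (a : (Fin n → ℝ) →ᵃ[ℝ] ℝ) :
    ∃ q : MvPolynomial (Fin n) ℝ, q.totalDegree ≤ 1 ∧ ∀ x, a x = MvPolynomial.eval x q := by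
  refine ⟨MvPolynomial.C (a 0) +
    ∑ j, MvPolynomial.C (a.linear (Pi.single j 1)) * MvPolynomial.X j, ?_, fun x => ?_⟩
  · refine (MvPolynomial.totalDegree_add _ _).trans (max_le (by simp) ?_)
    exact MvPolynomial.totalDegree_finsetSum_le fun j _ =>
      (MvPolynomial.isHomogeneous_C_mul_X _ j).totalDegree_le
  · have hx : a.linear x = ∑ j, a.linear (Pi.single j 1) * x j := by
      conv_lhs => rw [pi_eq_sum_univ' x]
      simp [mul_comm]
    rw [a.decomp]
    simp [hx, add_comm]

/-- The evaluation of a homogeneous polynomial of degree `k` at the barycentric coordinates is a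
combination of Bernstein monomials. -/
lemma eval_lam_mem_span {k : ℕ} {H : MvPolynomial (Fin (n + 1)) ℝ} (hH : H.IsHomogeneous k) :
    (fun x => MvPolynomial.eval (fun i => lam i x) H) ∈
      Submodule.span ℝ (bernsteinBary lam '' {α | ∑ i, α i = k}) := by
  have hsum : (fun x => MvPolynomial.eval (fun i => lam i x) H) =
      ∑ d ∈ H.support, H.coeff d • bernsteinBary lam d := by
    ext x
    simp [MvPolynomial.eval_eq', bernsteinBary]
  rw [hsum]
  refine Submodule.sum_mem _ fun d hd => Submodule.smul_mem _ _ (Submodule.subset_span ⟨d, ?_, rfl⟩)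
  rw [Set.mem_ofPred_eq, ← Finsupp.degree_eq_sum]
  exact (hH.degree_eq_sum_deg_support hd).symm

lemma span_bernsteinBary_eq (hv : AffineIndependent ℝ v)
    (hlam : ∀ i j, lam i (v j) = if i = j then 1 else 0)
    (hsum : ∀ x : Fin n → ℝ, ∑ i, lam i x = 1) (k : ℕ) :
    (Submodule.span ℝ (bernsteinBary lam '' {α | ∑ i, α i = k}) : Set ((Fin n → ℝ) → ℝ)) =
      {p | ∃ q : MvPolynomial (Fin n) ℝ, q.totalDegree ≤ k ∧
        p = fun x => MvPolynomial.eval x q} := by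
  apply Set.Subset.antisymm
  · let E : MvPolynomial (Fin n) ℝ →ₗ[ℝ] ((Fin n → ℝ) → ℝ) :=
      LinearMap.pi fun x => (MvPolynomial.aeval x).toLinearMap
    have hle : Submodule.span ℝ (bernsteinBary lam '' {α | ∑ i, α i = k}) ≤
        (MvPolynomial.restrictTotalDegree (Fin n) ℝ k).map E := by
      rw [Submodule.span_le]
      rintro _ ⟨α, hα, rfl⟩
      choose q hq hqe using fun i => (lam i).exists_mvPolynomial_eval
      refine ⟨∏ i, q i ^ α i, ?_, ?_⟩
      · rw [SetLike.mem_coe, MvPolynomial.mem_restrictTotalDegree]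
        refine (MvPolynomial.totalDegree_finsetProd _ _).trans ?_
        rw [Set.mem_ofPred_eq] at hα
        rw [← hα]
        refine Finset.sum_le_sum fun i _ => (MvPolynomial.totalDegree_pow _ _).trans ?_
        simpa using Nat.mul_le_mul_left (α i) (hq i)
      · ext x
        simp [E, bernsteinBary, hqe, MvPolynomial.aeval_eq_eval]
    intro p hp
    obtain ⟨q, hq, rfl⟩ := hle hp
    exact ⟨q, (MvPolynomial.mem_restrictTotalDegree _ _ _).mp hq,
      by ext x; simp [E, MvPolynomial.aeval_eq_eval]⟩
  · rintro _ ⟨q, hq, rfl⟩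
    let L : Fin n → MvPolynomial (Fin (n + 1)) ℝ := fun j =>
      ∑ i, MvPolynomial.C (v i j) * MvPolynomial.X i
    let U : MvPolynomial (Fin (n + 1)) ℝ := ∑ i, MvPolynomial.X i
    have hL : ∀ j, (L j).IsHomogeneous 1 := fun j =>
      MvPolynomial.IsHomogeneous.sum _ _ _ fun i _ => MvPolynomial.isHomogeneous_C_mul_X _ i
    have hU : U.IsHomogeneous 1 :=
      MvPolynomial.IsHomogeneous.sum _ _ _ fun i _ => MvPolynomial.isHomogeneous_X _ i
    have hLe : ∀ j x, MvPolynomial.eval (fun i => lam i x) (L j) = x j := by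
      intro j x
      conv_rhs => rw [eq_sum_lam_smul hv hlam x]
      simp [L, mul_comm]
    have hUe : ∀ x, MvPolynomial.eval (fun i => lam i x) U = 1 := by
      intro x
      simp [U, hsum]
    have heq : (fun x => MvPolynomial.eval x q) = fun x =>
        MvPolynomial.eval (fun i => lam i x)
          (∑ d ∈ q.support, MvPolynomial.C (q.coeff d) *
            ((∏ j, L j ^ d j) * U ^ (k - ∑ j, d j))) := by
      ext x
      rw [MvPolynomial.eval_eq']
      simp [hLe, hUe]
    rw [heq]
    refine eval_lam_mem_span (MvPolynomial.IsHomogeneous.sum _ _ _ fun d hd => ?_)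
    refine MvPolynomial.IsHomogeneous.C_mul ?_ _
    have hd' : ∑ j, d j ≤ k := by
      have := (MvPolynomial.le_totalDegree hd).trans hq
      rwa [Finsupp.sum_fintype _ _ (by simp)] at this
    have h := (MvPolynomial.IsHomogeneous.prod Finset.univ (fun j => L j ^ d j) (fun j => 1 * d j)
      fun j _ => (hL j).pow (d j)).mul (hU.pow (k - ∑ j, d j))
    have hdeg : ∑ j, 1 * d j + 1 * (k - ∑ j, d j) = k := by
      simp only [one_mul]
      omega
    rwa [hdeg] at h

end BarycentricCoordinates

section LatticeDecomposition

variable {n k : ℕ} {r : ℕ → ℕ}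

lemma mem_latticeS {l : ℕ} {f : Finset (Fin (n + 1))} {α : Fin (n + 1) → ℕ} :
    α ∈ latticeS n k r l f ↔ α ∈ latticeTube n k f (r l) ∧
      ∀ i < l, ∀ e ⊆ f, e.card = i + 1 → α ∉ latticeTube n k e (r i) := by
  simp only [latticeS, Set.mem_sdiff, Set.mem_iUnion, Set.mem_ofPred_eq]
  push Not
  exact and_congr_right fun _ =>
    ⟨fun h i hi e he hc => h i hi e ⟨he, hc⟩, fun h i hi e he => h i hi e he.1 he.2⟩

lemma mem_latticeSTop {α : Fin (n + 1) → ℕ} :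
    α ∈ latticeSTop n k r ↔ ∑ i, α i = k ∧
      ∀ i < n, ∀ e : Finset (Fin (n + 1)), e.card = i + 1 → α ∉ latticeTube n k e (r i) := by
  simp [latticeSTop]

lemma latticeTube_inter {f g : Finset (Fin (n + 1))} {s t : ℕ} {α : Fin (n + 1) → ℕ}
    (hf : α ∈ latticeTube n k f s) (hg : α ∈ latticeTube n k g t) :
    α ∈ latticeTube n k (f ∩ g) (s + t) := by
  refine ⟨hf.1, ?_⟩
  rw [Finset.compl_inter]
  have h := Finset.sum_union_inter (s₁ := fᶜ) (s₂ := gᶜ) (f := α)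
  have h₁ := hf.2
  have h₂ := hg.2
  omega

lemma latticeTube_mono {f : Finset (Fin (n + 1))} {s t : ℕ} (hst : s ≤ t) :
    latticeTube n k f s ⊆ latticeTube n k f t :=
  fun _ h => ⟨h.1, h.2.trans hst⟩

lemma radius_antitone (hrdec : ∀ l, l ≤ n - 2 → 2 * r (l + 1) ≤ r l) {i j : ℕ} (hij : i ≤ j)
    (hj : j < n) : r j ≤ r i := by
  induction j, hij using Nat.le_induction with
  | base => exact le_rfl
  | succ j _ ih =>
    have h₁ := hrdec j (by omega)
    have h₂ := ih (by omega)
    omega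

lemma two_mul_radius_le (hrdec : ∀ l, l ≤ n - 2 → 2 * r (l + 1) ≤ r l) {i j : ℕ} (hij : i < j)
    (hj : j < n) : 2 * r j ≤ r i := by
  have h₁ := hrdec i (by omega)
  have h₂ := radius_antitone hrdec (Nat.succ_le_of_lt hij) hj
  rw [Nat.succ_eq_add_one] at h₂
  omega

/-- A lattice point lying in two sets `S_ℓ(f)` and `S_ℓ'(g)` of non-top dimension forces `f = g`. -/
lemma eq_of_mem_latticeS (hrdec : ∀ l, l ≤ n - 2 → 2 * r (l + 1) ≤ r l) (hk : 2 * r 0 + 1 ≤ k)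
    {l l' : ℕ} {f g : Finset (Fin (n + 1))} (hll : l ≤ l') (hl' : l' < n)
    (hf : f.card = l + 1) (hg : g.card = l' + 1) {α : Fin (n + 1) → ℕ}
    (hαf : α ∈ latticeS n k r l f) (hαg : α ∈ latticeS n k r l' g) : f = g := by
  rw [mem_latticeS] at hαf hαg
  have hinter := latticeTube_inter hαf.1 hαg.1
  have hrl := radius_antitone hrdec hll hl'
  have hr0 := radius_antitone hrdec (Nat.zero_le l) (by omega)
  have hcard := Finset.card_le_card (Finset.inter_subset_left (s₁ := f) (s₂ := g))
  obtain hempty | hne := (f ∩ g).eq_empty_or_nonempty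
  · have h := hinter.2
    rw [hempty, Finset.compl_empty, hinter.1] at h
    omega
  · have hpos := hne.card_pos
    obtain hlt | hge := lt_or_ge (f ∩ g).card f.card
    · have h2 := two_mul_radius_le hrdec (i := (f ∩ g).card - 1) (j := l) (by omega) (by omega)
      exact absurd (latticeTube_mono (by omega) hinter)
        (hαf.2 ((f ∩ g).card - 1) (by omega) _ Finset.inter_subset_left (by omega))
    · have hfg : f ⊆ g :=
        Finset.inter_eq_left.mp (Finset.eq_of_subset_of_card_le Finset.inter_subset_left hge)
      obtain hlt | heq := hll.lt_or_eq
      · exact absurd hαf.1 (hαg.2 l hlt f hfg hf)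
      · exact Finset.eq_of_subset_of_card_le hfg (by omega)

/-- The piece of the lattice decomposition attached to the pair `(ℓ, f)`. -/
def latticePiece (n k : ℕ) (r : ℕ → ℕ)
    (q : {q : ℕ × Finset (Fin (n + 1)) // q.1 ≤ n ∧ q.2.card = q.1 + 1}) :
    Set (Fin (n + 1) → ℕ) :=
  if q.1.1 = n then latticeSTop n k r else latticeS n k r q.1.1 q.1.2

lemma latticePiece_subset
    (q : {q : ℕ × Finset (Fin (n + 1)) // q.1 ≤ n ∧ q.2.card = q.1 + 1}) :
    latticePiece n k r q ⊆ {α | ∑ i, α i = k} := by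
  intro α hα
  unfold latticePiece at hα
  split_ifs at hα
  · exact hα.1
  · exact hα.1.1

lemma latticePiece_eq_of_mem (hrdec : ∀ l, l ≤ n - 2 → 2 * r (l + 1) ≤ r l)
    (hk : 2 * r 0 + 1 ≤ k)
    {p q : {q : ℕ × Finset (Fin (n + 1)) // q.1 ≤ n ∧ q.2.card = q.1 + 1}}
    {α : Fin (n + 1) → ℕ} (hp : α ∈ latticePiece n k r p) (hq : α ∈ latticePiece n k r q) :
    p = q := by
  wlog hle : p.1.1 ≤ q.1.1 generalizing p q
  · exact (this hq hp (by omega)).symm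
  obtain ⟨⟨l, f⟩, hl, hf⟩ := p
  obtain ⟨⟨l', g⟩, hl', hg⟩ := q
  simp only at hl hf hl' hg hle
  simp only [latticePiece] at hp hq
  have hfg : f = g := by
    by_cases h' : l' = n
    · by_cases h : l = n
      · rw [Finset.card_eq_iff_eq_univ f |>.mp (by simp [hf, h]),
          Finset.card_eq_iff_eq_univ g |>.mp (by simp [hg, h'])]
      · rw [if_neg h] at hp
        rw [if_pos h'] at hq
        exact absurd (mem_latticeS.mp hp).1 ((mem_latticeSTop.mp hq).2 l (by omega) f hf)
    · rw [if_neg (by omega)] at hp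
      rw [if_neg h'] at hq
      exact eq_of_mem_latticeS hrdec hk hle (by omega) hf hg hp hq
  subst hfg
  obtain rfl : l = l' := by omega
  rfl

lemma iUnion_latticePiece : ⋃ q, latticePiece n k r q = {α | ∑ i, α i = k} := by
  classical
  refine Set.Subset.antisymm (Set.iUnion_subset latticePiece_subset) fun α hα => ?_
  rw [Set.mem_iUnion]
  by_cases h : ∃ i, i < n ∧ ∃ e : Finset (Fin (n + 1)), e.card = i + 1 ∧
      α ∈ latticeTube n k e (r i)
  · obtain ⟨hlt, e, he, hαe⟩ := Nat.find_spec h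
    refine ⟨⟨(Nat.find h, e), hlt.le, he⟩, ?_⟩
    rw [latticePiece, if_neg hlt.ne, mem_latticeS]
    exact ⟨hαe, fun i hi e' _ he' hα' =>
      Nat.find_min h hi ⟨hi.trans hlt, e', he', hα'⟩⟩
  · push Not at h
    refine ⟨⟨(n, Finset.univ), le_rfl, by simp⟩, ?_⟩
    rw [latticePiece, if_pos rfl, mem_latticeSTop]
    exact ⟨hα, h⟩

end LatticeDecomposition

/-- Spans of pairwise disjoint subfamilies of a linearly independent family are independent. -/
lemma LinearIndepOn.iSupIndep_span_image {ι κ M : Type*} [AddCommGroup M] [Module ℝ M]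
    {b : ι → M} {t : Set ι} (hb : LinearIndepOn ℝ b t) {S : κ → Set ι}
    (hS : ∀ q, S q ⊆ t) (hdisj : ∀ p q a, a ∈ S p → a ∈ S q → p = q) :
    iSupIndep fun q => Submodule.span ℝ (b '' S q) := by
  intro q
  simp only [← Submodule.span_iUnion, ← Set.image_iUnion]
  have himage : ∀ s ⊆ t, b '' s = (fun a : t => b a) '' (Subtype.val ⁻¹' s) := by
    intro s hs
    change b '' s = (b ∘ Subtype.val) '' _
    rw [Set.image_comp, Subtype.image_preimage_coe, Set.inter_eq_right.mpr hs]
  rw [himage _ (hS q), himage _ (Set.iUnion₂_subset fun p _ => hS p)]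
  refine LinearIndependent.disjoint_span_image hb (Set.disjoint_left.mpr fun a ha ha' => ?_)
  obtain ⟨p, hp, hap⟩ := Set.mem_iUnion₂.mp ha'
  exact hp (hdisj p q _ hap ha)

/-- geometric decomposition of `P_k`: the space of polynomial functions of
total degree at most `k` is the internal direct sum over `ℓ = 0,…,n` and sub-simplices
`f` (with `f = {0,…,n}` for `ℓ = n`) of the spans of the Bernstein monomials `λ^α`,
`α ∈ S_ℓ(f)`; in particular the Bernstein monomials indexed by `𝕋ⁿ_k` are linearly
independent (hence form a basis of `P_k`). -/
theorem geometric_decomposition_of_Pk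
    (n : ℕ) (hn : 2 ≤ n) (m : ℕ) (r : ℕ → ℕ)
    (hrn : r n = 0) (hrn1 : r (n - 1) = m)
    (hrdec : ∀ l, l ≤ n - 2 → 2 * r (l + 1) ≤ r l)
    (k : ℕ) (hk : 2 * r 0 + 1 ≤ k)
    (v : Fin (n + 1) → (Fin n → ℝ)) (hv : AffineIndependent ℝ v)
    (lam : Fin (n + 1) → ((Fin n → ℝ) →ᵃ[ℝ] ℝ))
    (hlam : ∀ i j, lam i (v j) = if i = j then 1 else 0)
    (hsum : ∀ x : Fin n → ℝ, ∑ i, lam i x = 1)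
    (W : {q : ℕ × Finset (Fin (n + 1)) // q.1 ≤ n ∧ q.2.card = q.1 + 1} →
      Submodule ℝ ((Fin n → ℝ) → ℝ))
    (hW : ∀ q, W q = Submodule.span ℝ
      (bernsteinBary lam ''
        (if q.1.1 = n then latticeSTop n k r else latticeS n k r q.1.1 q.1.2))) :
    iSupIndep W ∧
    ((⨆ q, W q : Submodule ℝ ((Fin n → ℝ) → ℝ)) : Set ((Fin n → ℝ) → ℝ))
      = {p | ∃ q : MvPolynomial (Fin n) ℝ, q.totalDegree ≤ k ∧
          p = fun x => MvPolynomial.eval x q} ∧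
    LinearIndependent ℝ
      (fun a : {α : Fin (n + 1) → ℕ // ∑ i, α i = k} => bernsteinBary lam a.1) := by
  have hli := linearIndependent_bernsteinBary hlam k
  obtain rfl : W = fun q => Submodule.span ℝ (bernsteinBary lam '' latticePiece n k r q) :=
    funext hW
  have hli' : LinearIndepOn ℝ (bernsteinBary lam) {α | ∑ i, α i = k} := hli
  refine ⟨hli'.iSupIndep_span_image latticePiece_subset
    fun p q a hp hq => latticePiece_eq_of_mem hrdec hk hp hq, ?_, hli⟩
  rw [← Submodule.span_iUnion, ← Set.image_iUnion, iUnion_latticePiece]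
  exact span_bernsteinBary_eq hv hlam hsum k
end
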